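/- arXiv:2505.08573 — 3 statements merged into one kernel-verified Lean document; each statement's English description precedes it below -/
import Mathlib

section
/- Let I be a nonempty finite index set, and for each i ∈ I let γ_i > 0 and α_i > 0 with α_i ≠ 1. Suppose λ > 0 satisfies ∑_{i∈I} γ_i^{(1−α_i)/α_i} · λ^{−1/α_i} = 1. Define y*_i = γ_i^{(1−α_i)/α_i} · λ^{−1/α_i}. Then y* is a global maximizer of the heterogeneous α-fair utility over the positive feasible region: for every y : I → ℝ with y_i > 0 for all i and ∑_{i∈I} y_i ≤ 1, one has ∑_{i∈I} (γ_i y_i)^{1−α_i}/(1−α_i) ≤ ∑_{i∈I} (γ_i y*_i)^{1−α_i}/(1−α_i). -/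
theorem haf_bern (t p : ℝ) (ht : 0 < t) (hp : p < 1) (hp0 : p ≠ 0) :
    t ^ p / p ≤ 1 / p + (t - 1) := by
  rcases lt_or_gt_of_ne hp0 with h | h
  · have h1 : 1 + p * (t - 1) ≤ t ^ p := by
      rw [Real.rpow_def_of_pos ht]
      have h2 := Real.add_one_le_exp (Real.log t * p)
      have h3 := Real.log_le_sub_one_of_pos ht
      nlinarith
    have h4 : 1 / p + (t - 1) = (1 + p * (t - 1)) / p := by field_simp
    rw [h4]
    exact div_le_div_of_nonpos_of_le h.le h1
  · have h1 : t ^ p ≤ 1 + p * (t - 1) := by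
      have := rpow_one_add_le_one_add_mul_self (s := t - 1) (by linarith) h.le hp.le
      simpa using this
    have h4 : 1 / p + (t - 1) = (1 + p * (t - 1)) / p := by field_simp
    rw [h4]
    exact div_le_div_of_nonneg_right h1 h.le

theorem haf_key (g a l : ℝ) (hg : 0 < g) (ha : 0 < a) (hl : 0 < l) :
    (g * (g ^ ((1 - a) / a) * l ^ (-1 / a))) ^ (1 - a) =
      l * (g ^ ((1 - a) / a) * l ^ (-1 / a)) := by
  have e1 := Real.exp_log hg
  have e2 := Real.exp_log hl
  rw [← e1, ← e2]
  simp only [← Real.exp_mul, ← Real.exp_add]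
  congr 1
  field_simp
  ring

/-- Lemma 1 (KKT characterization of the optimal resource allocation at one BS):
the allocation `ystar i = γ i ^ ((1 - α i)/α i) * lam ^ (-1/α i)` with multiplier `lam`
satisfying the normalization condition maximizes the heterogeneous α-fair utility
over all positive allocations with total bandwidth at most 1. -/
theorem haf_ra_kkt_global_max {I : Type*} [Fintype I] [Nonempty I]
    (γ α : I → ℝ) (hγ : ∀ i, 0 < γ i) (hα : ∀ i, 0 < α i) (hα1 : ∀ i, α i ≠ 1)
    (lam : ℝ) (hlam : 0 < lam)
    (hnorm : ∑ i, γ i ^ ((1 - α i) / α i) * lam ^ (-1 / α i) = 1)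
    (ystar : I → ℝ) (hystar : ∀ i, ystar i = γ i ^ ((1 - α i) / α i) * lam ^ (-1 / α i)) :
    ∀ y : I → ℝ, (∀ i, 0 < y i) → ∑ i, y i ≤ 1 →
      ∑ i, (γ i * y i) ^ (1 - α i) / (1 - α i) ≤
        ∑ i, (γ i * ystar i) ^ (1 - α i) / (1 - α i) := by
  intro y hy hsum
  have key : ∀ i, (γ i * y i) ^ (1 - α i) / (1 - α i) ≤
      (γ i * ystar i) ^ (1 - α i) / (1 - α i) + lam * (y i - ystar i) := by
    intro i
    have hs : 0 < ystar i := by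
      rw [hystar]
      exact mul_pos (Real.rpow_pos_of_pos (hγ i) _) (Real.rpow_pos_of_pos hlam _)
    have hk : (γ i * ystar i) ^ (1 - α i) = lam * ystar i := by
      rw [hystar]
      exact haf_key _ _ _ (hγ i) (hα i) hlam
    have ht : 0 < y i / ystar i := div_pos (hy i) hs
    have hb := haf_bern (y i / ystar i) (1 - α i) ht (by linarith [hα i])
      (sub_ne_zero.mpr (hα1 i).symm)
    have he : γ i * y i = (γ i * ystar i) * (y i / ystar i) := by field_simp
    rw [he, Real.mul_rpow (mul_pos (hγ i) hs).le ht.le, hk]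
    have hm := mul_le_mul_of_nonneg_left hb (mul_pos hlam hs).le
    have h5 : lam * ystar i * (y i / ystar i - 1) = lam * (y i - ystar i) := by field_simp
    calc _ = lam * ystar i * ((y i / ystar i) ^ (1 - α i) / (1 - α i)) := by ring
      _ ≤ _ := hm
      _ = _ := by rw [mul_add, h5]; ring
  have hs1 : ∑ i, ystar i = 1 := by
    rw [← hnorm]
    exact Finset.sum_congr rfl fun i _ => hystar i
  have h := Finset.sum_le_sum fun i (_ : i ∈ Finset.univ) => key i
  rw [Finset.sum_add_distrib, ← Finset.mul_sum, Finset.sum_sub_distrib, hs1] at h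
  nlinarith
end

section
/- Let α > 0 with α ≠ 1, and let γ, μ, γ', μ' > 0. Then (α/(1−α)) · γ^{(1−α)/α} · μ^{(α−1)/α} ≤ (α/(1−α)) · γ'^{(1−α)/α} · μ'^{(α−1)/α} if and only if γ/μ ≤ γ'/μ'. -/
/-- The optimal user-association rule (equation (24)): comparing the dual objective
terms is equivalent to comparing the price-normalized spectral efficiencies. -/
theorem dual_term_le_iff_ratio_le (α : ℝ) (hα : 0 < α) (hα1 : α ≠ 1)
    (γ μ γ' μ' : ℝ) (hγ : 0 < γ) (hμ : 0 < μ) (hγ' : 0 < γ') (hμ' : 0 < μ') :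
    (α / (1 - α)) * γ ^ ((1 - α) / α) * μ ^ ((α - 1) / α) ≤
        (α / (1 - α)) * γ' ^ ((1 - α) / α) * μ' ^ ((α - 1) / α) ↔
      γ / μ ≤ γ' / μ' := by
  have key : ∀ g m : ℝ, 0 < g → 0 < m →
      (α / (1 - α)) * g ^ ((1 - α) / α) * m ^ ((α - 1) / α) =
        (α / (1 - α)) * (g / m) ^ ((1 - α) / α) := by
    intro g m hg hm
    have h : (α - 1) / α = -((1 - α) / α) := by ring
    rw [h, Real.rpow_neg hm.le, Real.div_rpow hg.le hm.le]
    ring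
  rw [key γ μ hγ hμ, key γ' μ' hγ' hμ']
  have h1 : 0 < γ / μ := div_pos hγ hμ
  have h2 : 0 < γ' / μ' := div_pos hγ' hμ'
  rcases lt_or_gt_of_ne hα1 with h | h
  · have h3 : 0 < 1 - α := by linarith
    rw [mul_le_mul_iff_right₀ (div_pos hα h3),
      Real.rpow_le_rpow_iff h1.le h2.le (div_pos h3 hα)]
  · have h3 : 1 - α < 0 := by linarith
    rw [mul_le_mul_left_of_neg (div_neg_of_pos_of_neg hα h3),
      Real.rpow_le_rpow_iff_of_neg h2 h1 (div_neg_of_neg_of_pos h3 hα)]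
end

section
/- Let I and J be finite index sets. For each i ∈ I let α_i > 0 with α_i ≠ 1, for each (i,j) let γ̂_{ij} > 0 and x_{ij} ∈ {0,1}, and let λ*, λ̂ : J → ℝ with λ*_j > 0 and λ̂_j > 0 for all j. Assume the feasibility condition ∑_{i∈I} γ̂_{ij} · λ̂_j^{−1/α_i} · x_{ij} = 1 holds for every j ∈ J. Define f* = ∑_{j∈J} ∑_{i∈I} (γ̂_{ij} x_{ij}/(1−α_i)) · λ̂_j^{(α_i−1)/α_i} and g* = ∑_{j∈J} λ*_j + ∑_{i∈I} ∑_{j∈J} (α_i/(1−α_i)) · γ̂_{ij} x_{ij} · (λ*_j)^{(α_i−1)/α_i}. Then g* − f* = ∑_{j∈J} (λ*_j − λ̂_j) + ∑_{i∈I} ∑_{j∈J} (α_i γ̂_{ij} x_{ij}/(1−α_i)) · ((λ*_j)^{(α_i−1)/α_i} − (λ̂_j)^{(α_i−1)/α_i}). -/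
/-- Theorem 2 core computation (optimality gap, Appendix C): with feasible multipliers
`lamHat`, the gap between the dual value `g*` at `lamStar` and the primal HAF value
`f*` at `lamHat` equals the stated expression. -/
theorem optimality_gap_identity {I J : Type*} [Fintype I] [Fintype J]
    (α : I → ℝ) (hα : ∀ i, 0 < α i) (hα1 : ∀ i, α i ≠ 1)
    (γhat : I → J → ℝ) (hγhat : ∀ i j, 0 < γhat i j)
    (x : I → J → ℝ) (hx : ∀ i j, x i j = 0 ∨ x i j = 1)
    (lamStar lamHat : J → ℝ) (hlamStar : ∀ j, 0 < lamStar j) (hlamHat : ∀ j, 0 < lamHat j)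
    (hfeas : ∀ j, ∑ i, γhat i j * (lamHat j) ^ (-1 / α i) * x i j = 1) :
    (∑ j, lamStar j +
        ∑ i, ∑ j, (α i / (1 - α i)) * γhat i j * x i j * (lamStar j) ^ ((α i - 1) / α i)) -
      ∑ j, ∑ i, (γhat i j * x i j / (1 - α i)) * (lamHat j) ^ ((α i - 1) / α i) =
    ∑ j, (lamStar j - lamHat j) +
      ∑ i, ∑ j, (α i * γhat i j * x i j / (1 - α i)) *
        ((lamStar j) ^ ((α i - 1) / α i) - (lamHat j) ^ ((α i - 1) / α i)) := by
  have key : ∀ j, lamHat j = ∑ i, γhat i j * x i j * (lamHat j) ^ ((α i - 1) / α i) := by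
    intro j
    calc lamHat j = lamHat j * ∑ i, γhat i j * (lamHat j) ^ (-1 / α i) * x i j := by
          rw [hfeas j, mul_one]
      _ = _ := by
          rw [Finset.mul_sum]
          refine Finset.sum_congr rfl fun i _ => ?_
          have h : (α i - 1) / α i = 1 + -1 / α i := by
            have := (hα i).ne'
            field_simp
            ring
          rw [h, Real.rpow_add (hlamHat j), Real.rpow_one]
          ring
  have hf : ∑ j, ∑ i, (γhat i j * x i j / (1 - α i)) * (lamHat j) ^ ((α i - 1) / α i) =
      ∑ j, lamHat j + ∑ i, ∑ j, (α i * γhat i j * x i j / (1 - α i)) *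
        (lamHat j) ^ ((α i - 1) / α i) := by
    rw [Finset.sum_congr rfl fun j _ => key j, Finset.sum_comm (s := (Finset.univ : Finset I)),
      ← Finset.sum_add_distrib]
    refine Finset.sum_congr rfl fun j _ => ?_
    rw [← Finset.sum_add_distrib]
    refine Finset.sum_congr rfl fun i _ => ?_
    have : 1 - α i ≠ 0 := sub_ne_zero.mpr (hα1 i).symm
    generalize (lamHat j) ^ ((α i - 1) / α i) = t
    field_simp
    ring
  have hg : ∑ i, ∑ j, (α i / (1 - α i)) * γhat i j * x i j * (lamStar j) ^ ((α i - 1) / α i) =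
      ∑ i, ∑ j, (α i * γhat i j * x i j / (1 - α i)) * (lamStar j) ^ ((α i - 1) / α i) := by
    refine Finset.sum_congr rfl fun i _ => Finset.sum_congr rfl fun j _ => ?_
    ring
  rw [hf, hg]
  simp only [mul_sub, Finset.sum_sub_distrib]
  ring
end
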